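/- Let β > 0 and let φ_β : ℝ → ℝ be the hyperbolic entropy φ_β(θ) := θ·arsinh(θ/β) − √(θ² + β²). Then the Fenchel conjugate of φ_β is φ_β*(x) = β·cosh(x), i.e., for every x ∈ ℝ, sup_{y ∈ ℝ} { x·y − φ_β(y) } = β·cosh(x). -/

import Mathlib

/-- The hyperbolic entropy with parameter `β > 0`. -/
noncomputable def hypEnt (β θ : ℝ) : ℝ :=
  θ * Real.arsinh (θ / β) - Real.sqrt (θ ^ 2 + β ^ 2)

/-- The graph of `cosh` lies above its tangent lines. -/
lemma cosh_add_sub_mul_sinh_le_cosh (t x : ℝ) :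
    Real.cosh t + (x - t) * Real.sinh t ≤ Real.cosh x := by
  have tangent_exp (a b : ℝ) : Real.exp a * (b - a + 1) ≤ Real.exp b := by
    calc Real.exp a * (b - a + 1) ≤ Real.exp a * Real.exp (b - a) := by
          gcongr
          exact Real.add_one_le_exp _
      _ = Real.exp b := by rw [← Real.exp_add, add_sub_cancel]
  rw [Real.cosh_eq, Real.cosh_eq, Real.sinh_eq]
  linarith [tangent_exp t x, tangent_exp (-t) (-x)]

lemma hypEnt_mul_sinh {β : ℝ} (hβ : 0 < β) (t : ℝ) :
    hypEnt β (β * Real.sinh t) = β * (t * Real.sinh t - Real.cosh t) := by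
  have sqrt_eq : Real.sqrt ((β * Real.sinh t) ^ 2 + β ^ 2) = β * Real.cosh t := by
    rw [← Real.sqrt_sq (mul_pos hβ (Real.cosh_pos t)).le, mul_pow, mul_pow, Real.cosh_sq]
    ring_nf
  rw [hypEnt, sqrt_eq, mul_div_cancel_left₀ _ hβ.ne', Real.arsinh_sinh]
  ring

/-- The Fenchel conjugate of the hyperbolic entropy `φ_β` is `x ↦ β·cosh x`. -/
theorem stmt16 (β : ℝ) (hβ : 0 < β) :
    ∀ x : ℝ, (⨆ y : ℝ, (x * y - hypEnt β y)) = β * Real.cosh x := by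
  intro x
  refine IsGreatest.csSup_eq ⟨⟨β * Real.sinh x, ?_⟩, ?_⟩
  · dsimp only
    rw [hypEnt_mul_sinh hβ]
    ring
  · rintro _ ⟨y, rfl⟩
    obtain ⟨t, rfl⟩ : ∃ t, β * Real.sinh t = y :=
      ⟨Real.arsinh (y / β), by rw [Real.sinh_arsinh, mul_div_cancel₀ _ hβ.ne']⟩
    dsimp only
    rw [hypEnt_mul_sinh hβ]
    calc x * (β * Real.sinh t) - β * (t * Real.sinh t - Real.cosh t)
        = β * (Real.cosh t + (x - t) * Real.sinh t) := by ring
      _ ≤ β * Real.cosh x := by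
          gcongr
          exact cosh_add_sub_mul_sinh_le_cosh t x
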